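/- Let β > 0 and let γ_param : ℤ → ℝ be even with Σ_{h∈ℤ} |γ_param(h)| < ∞ and spectral density f_param(λ) := (1/(2π)) Σ_{h∈ℤ} γ_param(h) e^{−ihλ} satisfying f_param(λ) ≥ β for all λ. Let f : [0,2π] → (0,∞) be bounded. For each n ≥ 1 let P_{param,n} := N_n(0, Γ_n(γ_param)) (the Gaussian parametric working model) and let P^C_n be the pushforward of P_{param,n} under the linear map z ↦ F_n^T C_n^{1/2} F_n z with C_n := C_n(f, f_param) (so that P^C_n is the law of the nonparametrically corrected likelihood). Then the periodogram is asymptotically unbiased for f under the corrected likelihood, uniformly over the Fourier frequencies: max_{0 ≤ j ≤ ⌊n/2⌋} | ∫_{ℝ^n} I_{n,λ_j}(z) dP^C_n(z) − f(λ_j) | → 0 as n → ∞; moreover, for every n and every 0 ≤ j ≤ ⌊n/2⌋, the exact identity ∫ I_{n,λ_j} dP^C_n = (f(λ_j)/f_param(λ_j)) ∫ I_{n,λ_j} dP_{param,n} holds. -/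

import Mathlib

open MeasureTheory Matrix Filter

/-- The `j`-th Fourier frequency `λ_j = 2πj/n`. -/
noncomputable def fourierFreq (n j : ℕ) : ℝ := 2 * Real.pi * j / n

/-- The periodogram `I_{n,λ}(z) = (2πn)⁻¹ |∑_{t=1}^n z_t e^{-itλ}|²`. -/
noncomputable def periodogram (n : ℕ) (lam : ℝ) (z : Fin n → ℝ) : ℝ :=
  1 / (2 * Real.pi * n) *
    Complex.normSq (∑ t : Fin n, (z t : ℂ) *
      Complex.exp (-Complex.I * (((t : ℕ) + 1 : ℕ) : ℂ) * (lam : ℂ)))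

/-- The real orthogonal Fourier transform matrix `F_n` with rows
`e_0, c_1, s_1, …, c_N, s_N` (and additionally `e_{n/2}` as last row for `n` even). -/
noncomputable def Fmat (n : ℕ) : Matrix (Fin n) (Fin n) ℝ :=
  Matrix.of fun r t : Fin n =>
    if r.val = 0 then 1 / Real.sqrt n
    else if n % 2 = 0 ∧ r.val = n - 1 then (-1 : ℝ) ^ ((t : ℕ) + 1) / Real.sqrt n
    else if r.val % 2 = 1 then
      Real.sqrt 2 / Real.sqrt n *
        Real.cos (2 * Real.pi * (((r.val + 1) / 2 : ℕ) : ℝ) * (((t : ℕ) + 1 : ℕ) : ℝ) / n)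
    else
      -(Real.sqrt 2 / Real.sqrt n) *
        Real.sin (2 * Real.pi * ((r.val / 2 : ℕ) : ℝ) * (((t : ℕ) + 1 : ℕ) : ℝ) / n)

/-- The diagonal matrix `D_n(f)` with entries `2πf(λ_0), 2πf(λ_1), 2πf(λ_1), …`
matching the row ordering of `F_n`. -/
noncomputable def Dmat (n : ℕ) (f : ℝ → ℝ) : Matrix (Fin n) (Fin n) ℝ :=
  Matrix.diagonal fun r : Fin n => 2 * Real.pi * f (fourierFreq n ((r.val + 1) / 2))

/-- The diagonal correction matrix `C_n(f, f_param)` with entries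
`c(λ_0), c(λ_1), c(λ_1), …` where `c = f/f_param`, matching the row ordering of `F_n`. -/
noncomputable def Cmat (n : ℕ) (f fp : ℝ → ℝ) : Matrix (Fin n) (Fin n) ℝ :=
  Matrix.diagonal fun r : Fin n =>
    f (fourierFreq n ((r.val + 1) / 2)) / fp (fourierFreq n ((r.val + 1) / 2))

/-- Entrywise real power of the diagonal of a matrix: for a diagonal matrix `A` with
positive entries, `diagRPow n A (-(1/2))` is `A^{-1/2}` etc. -/
noncomputable def diagRPow (n : ℕ) (A : Matrix (Fin n) (Fin n) ℝ) (p : ℝ) :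
    Matrix (Fin n) (Fin n) ℝ :=
  Matrix.diagonal fun i => A i i ^ p

/-- The spectral density `f(λ) = (2π)⁻¹ ∑_{h∈ℤ} γ(h) e^{-ihλ}` of an even, absolutely
summable autocovariance function `γ` (real-valued since `γ` is even). -/
noncomputable def specDens (γ : ℤ → ℝ) (lam : ℝ) : ℝ :=
  1 / (2 * Real.pi) * ∑' h : ℤ, γ h * Real.cos (h * lam)

/-- The `n × n` Toeplitz autocovariance matrix `Γ_n(γ)` with entries `γ(s - t)`. -/
noncomputable def Toeplitz (n : ℕ) (γ : ℤ → ℝ) : Matrix (Fin n) (Fin n) ℝ :=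
  Matrix.of fun s t : Fin n => γ ((s : ℤ) - (t : ℤ))

open scoped Classical in
/-- The positive semidefinite square root of a positive semidefinite matrix
(junk value `0` if the matrix is not positive semidefinite). -/
noncomputable def matSqrt {n : ℕ} (S : Matrix (Fin n) (Fin n) ℝ) :
    Matrix (Fin n) (Fin n) ℝ :=
  if h : S.PosSemidef then
    (h.1.eigenvectorUnitary : Matrix (Fin n) (Fin n) ℝ) *
      Matrix.diagonal (Real.sqrt ∘ h.1.eigenvalues) *
      (star h.1.eigenvectorUnitary : Matrix (Fin n) (Fin n) ℝ)
  else 0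

/-- The centered Gaussian distribution `N_n(0, S)` on `ℝⁿ`: the pushforward of the
`n`-fold product of standard normals under `w ↦ S^{1/2} w`. -/
noncomputable def gaussianVec (n : ℕ) (S : Matrix (Fin n) (Fin n) ℝ) :
    MeasureTheory.Measure (Fin n → ℝ) :=
  MeasureTheory.Measure.map (fun w => (matSqrt S).mulVec w)
    (MeasureTheory.Measure.pi fun _ : Fin n => ProbabilityTheory.gaussianReal 0 1)

lemma sum_trig (n : ℕ) (hn : 1 ≤ n) (m : ℤ) :
    ∑ t : Fin n, Complex.exp (Complex.I * ((2 * Real.pi * m * (((t : ℕ) + 1 : ℕ) : ℝ) / n : ℝ) : ℂ))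
      = if (n : ℤ) ∣ m then (n : ℂ) else 0 := by
  have hn0 : (n : ℂ) ≠ 0 := by exact_mod_cast (by omega : n ≠ 0)
  have hpi : (2 * (Real.pi : ℂ) * Complex.I) ≠ 0 := by
    simp [Real.pi_ne_zero]
  set ζ : ℂ := Complex.exp (2 * Real.pi * Complex.I * m / n) with hζ
  have h1 : ∀ t : Fin n, Complex.exp (Complex.I * ((2 * Real.pi * m * (((t : ℕ) + 1 : ℕ) : ℝ) / n : ℝ) : ℂ)) = ζ * ζ ^ (t : ℕ) := by
    intro t
    rw [← pow_succ', hζ, ← Complex.exp_nat_mul]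
    congr 1
    push_cast
    ring
  rw [Finset.sum_congr rfl (fun t _ => h1 t), ← Finset.mul_sum, Fin.sum_univ_eq_sum_range (fun k => ζ ^ k)]
  have hone : ζ = 1 ↔ (n : ℤ) ∣ m := by
    rw [hζ, Complex.exp_eq_one_iff]
    constructor
    · rintro ⟨k, hk⟩
      refine ⟨k, ?_⟩
      have : (m : ℂ) = n * k := by
        field_simp at hk
        have h2 : (2 * (Real.pi : ℂ) * Complex.I) * m = (2 * (Real.pi : ℂ) * Complex.I) * (n * k) := by
          linear_combination (2 * (Real.pi : ℂ) * Complex.I) * hk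
        exact mul_left_cancel₀ hpi h2
      exact_mod_cast this
    · rintro ⟨k, rfl⟩
      refine ⟨k, ?_⟩
      push_cast
      field_simp
  have hpow : ζ ^ n = 1 := by
    rw [hζ, ← Complex.exp_nat_mul, Complex.exp_eq_one_iff]
    exact ⟨m, by field_simp⟩
  split_ifs with h
  · rw [hone.2 h]; simp
  · have hne : ζ ≠ 1 := fun h' => h (hone.1 h')
    have := mul_neg_geom_sum ζ n
    rw [hpow, sub_self] at this
    rcases mul_eq_zero.1 this with h' | h'
    · exact absurd (sub_eq_zero.1 h').symm hne
    · rw [h', mul_zero]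

lemma sum_cos_fourier (n : ℕ) (hn : 1 ≤ n) (m : ℤ) :
    ∑ t : Fin n, Real.cos (2 * Real.pi * m * (((t : ℕ) + 1 : ℕ) : ℝ) / n)
      = if (n : ℤ) ∣ m then (n : ℝ) else 0 := by
  have := congrArg Complex.re (sum_trig n hn m)
  rw [Complex.re_sum] at this
  simp only [mul_comm Complex.I, Complex.exp_ofReal_mul_I_re] at this
  rw [this]; split_ifs <;> simp

lemma sum_sin_fourier (n : ℕ) (hn : 1 ≤ n) (m : ℤ) :
    ∑ t : Fin n, Real.sin (2 * Real.pi * m * (((t : ℕ) + 1 : ℕ) : ℝ) / n) = 0 := by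
  have := congrArg Complex.im (sum_trig n hn m)
  rw [Complex.im_sum] at this
  simp only [mul_comm Complex.I, Complex.exp_ofReal_mul_I_im] at this
  rw [this]; split_ifs <;> simp

/-- angle of the Fourier row -/
noncomputable def angF (n k : ℕ) (t : Fin n) : ℝ :=
  2 * Real.pi * k * (((t : ℕ) + 1 : ℕ) : ℝ) / n

lemma sum_cos_cos (n : ℕ) (hn : 1 ≤ n) (k l : ℕ) :
    ∑ t : Fin n, Real.cos (angF n k t) * Real.cos (angF n l t)
      = ((if (n : ℤ) ∣ (k : ℤ) - l then (n : ℝ) else 0) +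
          (if (n : ℤ) ∣ (k : ℤ) + l then (n : ℝ) else 0)) / 2 := by
  rw [← sum_cos_fourier n hn, ← sum_cos_fourier n hn, ← Finset.sum_add_distrib, Finset.sum_div]
  refine Finset.sum_congr rfl fun t _ => ?_
  have h1 : 2 * Real.pi * (((k : ℤ) - l : ℤ) : ℝ) * (((t : ℕ) + 1 : ℕ) : ℝ) / n
      = angF n k t - angF n l t := by unfold angF; push_cast; ring
  have h2 : 2 * Real.pi * (((k : ℤ) + l : ℤ) : ℝ) * (((t : ℕ) + 1 : ℕ) : ℝ) / n
      = angF n k t + angF n l t := by unfold angF; push_cast; ring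
  rw [h1, h2, Real.cos_add, Real.cos_sub]; ring

lemma sum_sin_sin (n : ℕ) (hn : 1 ≤ n) (k l : ℕ) :
    ∑ t : Fin n, Real.sin (angF n k t) * Real.sin (angF n l t)
      = ((if (n : ℤ) ∣ (k : ℤ) - l then (n : ℝ) else 0) -
          (if (n : ℤ) ∣ (k : ℤ) + l then (n : ℝ) else 0)) / 2 := by
  rw [← sum_cos_fourier n hn, ← sum_cos_fourier n hn, ← Finset.sum_sub_distrib, Finset.sum_div]
  refine Finset.sum_congr rfl fun t _ => ?_
  have h1 : 2 * Real.pi * (((k : ℤ) - l : ℤ) : ℝ) * (((t : ℕ) + 1 : ℕ) : ℝ) / n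
      = angF n k t - angF n l t := by unfold angF; push_cast; ring
  have h2 : 2 * Real.pi * (((k : ℤ) + l : ℤ) : ℝ) * (((t : ℕ) + 1 : ℕ) : ℝ) / n
      = angF n k t + angF n l t := by unfold angF; push_cast; ring
  rw [h1, h2, Real.cos_add, Real.cos_sub]; ring

lemma sum_sin_cos (n : ℕ) (hn : 1 ≤ n) (k l : ℕ) :
    ∑ t : Fin n, Real.sin (angF n k t) * Real.cos (angF n l t) = 0 := by
  have : (0 : ℝ) = (∑ t : Fin n, Real.sin (2 * Real.pi * (((k : ℤ) - l : ℤ) : ℝ) * (((t : ℕ) + 1 : ℕ) : ℝ) / n)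
    + ∑ t : Fin n, Real.sin (2 * Real.pi * (((k : ℤ) + l : ℤ) : ℝ) * (((t : ℕ) + 1 : ℕ) : ℝ) / n)) / 2 := by
    rw [sum_sin_fourier n hn, sum_sin_fourier n hn]; simp
  rw [this, ← Finset.sum_add_distrib, Finset.sum_div]
  refine Finset.sum_congr rfl fun t _ => ?_
  have h1 : 2 * Real.pi * (((k : ℤ) - l : ℤ) : ℝ) * (((t : ℕ) + 1 : ℕ) : ℝ) / n
      = angF n k t - angF n l t := by unfold angF; push_cast; ring
  have h2 : 2 * Real.pi * (((k : ℤ) + l : ℤ) : ℝ) * (((t : ℕ) + 1 : ℕ) : ℝ) / n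
      = angF n k t + angF n l t := by unfold angF; push_cast; ring
  rw [h1, h2, Real.sin_add, Real.sin_sub]; ring

/-- amplitude of the Fourier row -/
noncomputable def ampF (n : ℕ) (r : ℕ) : ℝ :=
  if r = 0 then 1 / Real.sqrt n else if n % 2 = 0 ∧ r = n - 1 then 1 / Real.sqrt n
  else if r % 2 = 1 then Real.sqrt 2 / Real.sqrt n else -(Real.sqrt 2 / Real.sqrt n)

lemma Fmat_apply (n : ℕ) (r t : Fin n) :
    Fmat n r t = ampF n r * (if r.val = 0 ∨ r.val % 2 = 1 then Real.cos (angF n ((r.val + 1) / 2) t)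
      else Real.sin (angF n ((r.val + 1) / 2) t)) := by
  have hr := r.isLt
  simp only [Fmat, Matrix.of_apply, ampF]
  by_cases h0 : r.val = 0
  · simp [h0, angF]
  by_cases h1 : n % 2 = 0 ∧ r.val = n - 1
  · have hodd : r.val % 2 = 1 := by omega
    have hk : (r.val + 1) / 2 = n / 2 := by omega
    rw [if_neg h0, if_pos h1, if_neg h0, if_pos h1, if_pos (Or.inr hodd), hk]
    have hang : angF n (n / 2) t = (((t : ℕ) + 1 : ℕ) : ℝ) * Real.pi := by
      obtain ⟨m, hm⟩ : ∃ m, n = 2 * m := ⟨n / 2, by omega⟩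
      have hm0 : (m : ℝ) ≠ 0 := by
        have : m ≠ 0 := by omega
        exact_mod_cast this
      have h2 : n / 2 = m := by omega
      unfold angF
      rw [h2]
      have h3 : (n : ℝ) = 2 * m := by exact_mod_cast hm
      rw [h3]
      field_simp
    rw [hang, Real.cos_nat_mul_pi]
    ring
  by_cases h2 : r.val % 2 = 1
  · rw [if_neg h0, if_neg h1, if_neg h0, if_neg h1, if_pos h2, if_pos h2, if_pos (Or.inr h2)]
    rfl
  · rw [if_neg h0, if_neg h1, if_neg h0, if_neg h1, if_neg h2, if_neg h2, if_neg (by tauto)]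
    have : (r.val + 1) / 2 = r.val / 2 := by omega
    rw [this]
    rfl

lemma dvd_sub_iff' (n k l : ℕ) (hn : 1 ≤ n) (hk : 2 * k ≤ n) (hl : 2 * l ≤ n) :
    ((n : ℤ) ∣ (k : ℤ) - l) ↔ k = l := by
  constructor
  · rintro ⟨c, hc⟩
    have h1 : c < 1 := by nlinarith
    have h2 : -1 < c := by nlinarith
    have : c = 0 := by omega
    subst this; omega
  · rintro rfl; simp

lemma dvd_add_iff' (n k l : ℕ) (hn : 1 ≤ n) (hk : 2 * k ≤ n) (hl : 2 * l ≤ n) :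
    ((n : ℤ) ∣ (k : ℤ) + l) ↔ (k = 0 ∧ l = 0) ∨ (2 * k = n ∧ 2 * l = n) := by
  constructor
  · rintro ⟨c, hc⟩
    have h1 : c < 2 := by nlinarith
    have h2 : -1 < c := by nlinarith
    have : c = 0 ∨ c = 1 := by omega
    rcases this with rfl | rfl <;> omega
  · rintro (⟨rfl, rfl⟩ | ⟨h1, h2⟩)
    · simp
    · exact ⟨1, by omega⟩

lemma Fmat_orth (n : ℕ) (hn : 1 ≤ n) : Fmat n * (Fmat n)ᵀ = 1 := by
  have hn0 : (0 : ℝ) < n := by exact_mod_cast hn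
  have hs : Real.sqrt n * Real.sqrt n = n := Real.mul_self_sqrt hn0.le
  have hs0 : Real.sqrt n ≠ 0 := (Real.sqrt_pos.2 hn0).ne'
  have h22 : Real.sqrt 2 * Real.sqrt 2 = 2 := Real.mul_self_sqrt (by norm_num)
  ext r s
  have hr := r.isLt
  have hss := s.isLt
  rw [Matrix.mul_apply, Matrix.one_apply]
  simp only [Matrix.transpose_apply, Fmat_apply]
  simp only [mul_mul_mul_comm (ampF n r)]
  rw [← Finset.mul_sum]
  have hA := dvd_sub_iff' n ((r.val + 1) / 2) ((s.val + 1) / 2) hn (by omega) (by omega)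
  have hB := dvd_add_iff' n ((r.val + 1) / 2) ((s.val + 1) / 2) hn (by omega) (by omega)
  have ers : r = s ↔ r.val = s.val := Fin.ext_iff
  by_cases hcr : r.val = 0 ∨ r.val % 2 = 1 <;> by_cases hcs : s.val = 0 ∨ s.val % 2 = 1
  · simp only [if_pos hcr, if_pos hcs]
    rw [sum_cos_cos n hn]
    simp only [hA, hB, ers]
    by_cases he : r.val = s.val
    · rw [← he]
      by_cases hsp : r.val = 0 ∨ (n % 2 = 0 ∧ r.val = n - 1)
      · have : ampF n r = 1 / Real.sqrt n := by
          unfold ampF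
          rcases hsp with h | h
          · rw [if_pos h]
          · rw [if_pos h]; simp
        rw [this, if_pos rfl, if_pos (by omega), if_pos rfl]
        field_simp
        nlinarith
      · have : ampF n r = Real.sqrt 2 / Real.sqrt n := by
          unfold ampF
          rw [if_neg (by tauto), if_neg (by tauto), if_pos (by omega)]
        rw [this, if_pos rfl, if_neg (by omega), if_pos rfl]
        field_simp
        nlinarith
    · rw [if_neg (by omega), if_neg (by omega), if_neg he]; simp
  · simp only [if_pos hcr, if_neg hcs]
    have := sum_sin_cos n hn ((s.val + 1) / 2) ((r.val + 1) / 2)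
    simp only [mul_comm (Real.cos _)]
    rw [this, if_neg, mul_zero]
    rintro rfl; tauto
  · simp only [if_neg hcr, if_pos hcs]
    rw [sum_sin_cos n hn, if_neg, mul_zero]
    rintro rfl; tauto
  · simp only [if_neg hcr, if_neg hcs]
    rw [sum_sin_sin n hn]
    simp only [hA, hB, ers]
    by_cases he : r.val = s.val
    · rw [← he]
      have : ampF n r = -(Real.sqrt 2 / Real.sqrt n) := by
        unfold ampF
        rw [if_neg (by tauto), if_neg (by omega), if_neg (by omega)]
      rw [this, if_pos rfl, if_neg (by omega), if_pos rfl]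
      field_simp
      nlinarith
    · rw [if_neg (by omega), if_neg (by omega), if_neg he]; simp

lemma periodogram_eq (n : ℕ) (lam : ℝ) (z : Fin n → ℝ) :
    periodogram n lam z = 1 / (2 * Real.pi * n) *
      ((∑ t : Fin n, z t * Real.cos ((((t : ℕ) + 1 : ℕ) : ℝ) * lam)) ^ 2 +
        (∑ t : Fin n, z t * Real.sin ((((t : ℕ) + 1 : ℕ) : ℝ) * lam)) ^ 2) := by
  unfold periodogram
  congr 1
  rw [Complex.normSq_apply, Complex.re_sum, Complex.im_sum]
  have h : ∀ t : Fin n, Complex.exp (-Complex.I * (((t : ℕ) + 1 : ℕ) : ℂ) * (lam : ℂ))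
      = Complex.exp (((-((((t : ℕ) + 1 : ℕ) : ℝ) * lam) : ℝ) : ℂ) * Complex.I) := by
    intro t; congr 1; push_cast; ring
  simp only [h, Complex.re_ofReal_mul, Complex.im_ofReal_mul, Complex.exp_ofReal_mul_I_re,
    Complex.exp_ofReal_mul_I_im, Real.cos_neg, Real.sin_neg, mul_neg, Finset.sum_neg_distrib]
  ring

lemma angF_eq (n j : ℕ) (t : Fin n) :
    (((t : ℕ) + 1 : ℕ) : ℝ) * fourierFreq n j = angF n j t := by
  unfold fourierFreq angF; ring

lemma ampF_ne (n r : ℕ) (hn : 1 ≤ n) : ampF n r ≠ 0 := by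
  have hn0 : (0 : ℝ) < n := by exact_mod_cast hn
  have hs0 : Real.sqrt n ≠ 0 := (Real.sqrt_pos.2 hn0).ne'
  have h2 : Real.sqrt 2 ≠ 0 := by simp
  unfold ampF
  split_ifs <;> simp [hs0, h2]

lemma Fmat_mulVec_corr (n : ℕ) (hn : 1 ≤ n) (A : Matrix (Fin n) (Fin n) ℝ) (z : Fin n → ℝ)
    (r : Fin n) :
    (Fmat n).mulVec (((Fmat n)ᵀ * diagRPow n A (1 / 2) * Fmat n).mulVec z) r
      = A r r ^ (1 / 2 : ℝ) * (Fmat n).mulVec z r := by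
  rw [Matrix.mulVec_mulVec, ← Matrix.mul_assoc, ← Matrix.mul_assoc, Fmat_orth n hn, Matrix.one_mul,
    ← Matrix.mulVec_mulVec, diagRPow, Matrix.mulVec_diagonal]

lemma periodogram_corr (n : ℕ) (hn : 1 ≤ n) (f fp : ℝ → ℝ) (j : ℕ) (hj : j ≤ n / 2)
    (hc : 0 ≤ f (fourierFreq n j) / fp (fourierFreq n j)) (z : Fin n → ℝ) :
    periodogram n (fourierFreq n j)
      (((Fmat n)ᵀ * diagRPow n (Cmat n f fp) (1 / 2) * Fmat n).mulVec z)
      = f (fourierFreq n j) / fp (fourierFreq n j) * periodogram n (fourierFreq n j) z := by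
  set y := ((Fmat n)ᵀ * diagRPow n (Cmat n f fp) (1 / 2) * Fmat n).mulVec z with hy
  set c := f (fourierFreq n j) / fp (fourierFreq n j) with hcdef
  have hrow : ∀ r : Fin n, (r.val + 1) / 2 = j →
      (Fmat n).mulVec y r = c ^ (1 / 2 : ℝ) * (Fmat n).mulVec z r := by
    intro r hr
    rw [hy, Fmat_mulVec_corr n hn]
    simp [Cmat, hr, hcdef]
  have hcc : c ^ (1 / 2 : ℝ) * c ^ (1 / 2 : ℝ) = c := by
    rw [← Real.sqrt_eq_rpow, Real.mul_self_sqrt hc]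
  have hcos : ∑ t : Fin n, y t * Real.cos (angF n j t)
      = c ^ (1 / 2 : ℝ) * ∑ t : Fin n, z t * Real.cos (angF n j t) := by
    obtain ⟨r, hr1, hr2⟩ : ∃ r : Fin n, (r.val + 1) / 2 = j ∧ (r.val = 0 ∨ r.val % 2 = 1) := by
      by_cases h : j = 0
      · exact ⟨⟨0, by omega⟩, by simp [h], by simp⟩
      · exact ⟨⟨2 * j - 1, by omega⟩, by simp; omega, by simp; omega⟩
    have key : ∀ w : Fin n → ℝ, (Fmat n).mulVec w r
        = ampF n r * ∑ t : Fin n, w t * Real.cos (angF n j t) := by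
      intro w
      simp only [Matrix.mulVec, dotProduct, Fmat_apply, if_pos hr2, hr1]
      rw [Finset.mul_sum]
      exact Finset.sum_congr rfl fun t _ => by ring
    have := hrow r hr1
    rw [key, key] at this
    apply mul_left_cancel₀ (ampF_ne n r hn)
    rw [this]; ring
  have hsin : ∑ t : Fin n, y t * Real.sin (angF n j t)
      = c ^ (1 / 2 : ℝ) * ∑ t : Fin n, z t * Real.sin (angF n j t) := by
    by_cases h0 : j = 0 ∨ 2 * j = n
    · have : ∀ t : Fin n, Real.sin (angF n j t) = 0 := by
        intro t
        rcases h0 with h | h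
        · simp [angF, h]
        · have hj0 : (j : ℝ) ≠ 0 := by
            have : j ≠ 0 := by omega
            exact_mod_cast this
          have h3 : (n : ℝ) = 2 * j := by exact_mod_cast h.symm
          have : angF n j t = (((t : ℕ) + 1 : ℕ) : ℝ) * Real.pi := by
            unfold angF; rw [h3]; field_simp
          rw [this, Real.sin_nat_mul_pi]
      simp [this]
    · obtain ⟨r, hr1, hr2⟩ : ∃ r : Fin n, (r.val + 1) / 2 = j ∧ ¬ (r.val = 0 ∨ r.val % 2 = 1) :=
        ⟨⟨2 * j, by omega⟩, by simp; omega, by simp; omega⟩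
      have key : ∀ w : Fin n → ℝ, (Fmat n).mulVec w r
          = ampF n r * ∑ t : Fin n, w t * Real.sin (angF n j t) := by
        intro w
        simp only [Matrix.mulVec, dotProduct, Fmat_apply, if_neg hr2, hr1]
        rw [Finset.mul_sum]
        exact Finset.sum_congr rfl fun t _ => by ring
      have := hrow r hr1
      rw [key, key] at this
      apply mul_left_cancel₀ (ampF_ne n r hn)
      rw [this]; ring
  rw [periodogram_eq, periodogram_eq]
  simp only [angF_eq]
  rw [hcos, hsin, mul_pow, mul_pow, sq (c ^ (1 / 2 : ℝ)), hcc]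
  ring

lemma periodogram_continuous (n : ℕ) (lam : ℝ) : Continuous (periodogram n lam) := by
  have : periodogram n lam = fun z => _ := funext (periodogram_eq n lam)
  rw [this]
  fun_prop

lemma mulVec_measurable (n : ℕ) (A : Matrix (Fin n) (Fin n) ℝ) :
    Measurable (fun w : Fin n → ℝ => A.mulVec w) :=
  (Continuous.matrix_mulVec continuous_const continuous_id).measurable

/-! Gaussian second moments -/

lemma gauss_sq (n : ℕ) (b : Fin n → ℝ) :
    Integrable (fun w : Fin n → ℝ => (∑ i, b i * w i) ^ 2)
      (Measure.pi fun _ : Fin n => ProbabilityTheory.gaussianReal 0 1) ∧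
    ∫ w : Fin n → ℝ, (∑ i, b i * w i) ^ 2
      ∂(Measure.pi fun _ : Fin n => ProbabilityTheory.gaussianReal 0 1) = ∑ i, b i ^ 2 := by
  set μ := (Measure.pi fun _ : Fin n => ProbabilityTheory.gaussianReal 0 1) with hμ
  have hm : ∀ i : Fin n, MemLp (fun x : ℝ => b i * x) 2 (ProbabilityTheory.gaussianReal 0 1) :=
    fun i => (ProbabilityTheory.memLp_id_gaussianReal 2).const_mul (b i)
  have hm2 : ∀ i : Fin n, MemLp (fun w : Fin n → ℝ => b i * w i) 2 μ := fun i =>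
    (hm i).comp_measurePreserving (measurePreserving_eval _ i)
  have hsum : MemLp (fun w : Fin n → ℝ => ∑ i, b i * w i) 2 μ :=
    memLp_finsetSum _ fun i _ => hm2 i
  refine ⟨hsum.integrable_sq, ?_⟩
  have hv := ProbabilityTheory.variance_sum_pi hm
  have hmean : ∫ w, (∑ i, b i * w i) ∂μ = 0 := by
    rw [integral_finsetSum _ fun i _ => (hm2 i).integrable (by norm_num)]
    refine Finset.sum_eq_zero fun i _ => ?_
    rw [integral_const_mul, hμ, integral_comp_eval (μ := fun _ : Fin n => ProbabilityTheory.gaussianReal 0 1) (i := i) (f := fun x : ℝ => x) (by fun_prop)]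
    simp
  have e : (∑ i : Fin n, fun w : Fin n → ℝ => b i * w i) = fun w => ∑ i, b i * w i := by
    ext w; simp
  rw [e, ProbabilityTheory.variance_of_integral_eq_zero hsum.aemeasurable hmean] at hv
  rw [hv]
  refine Finset.sum_congr rfl fun i _ => ?_
  rw [ProbabilityTheory.variance_const_mul, ProbabilityTheory.variance_fun_id_gaussianReal]
  simp

lemma matSqrt_mul (n : ℕ) (S : Matrix (Fin n) (Fin n) ℝ) (h : S.PosSemidef) :
    matSqrt S * (matSqrt S)ᵀ = S := by
  have hU : (star h.1.eigenvectorUnitary : Matrix (Fin n) (Fin n) ℝ) * (h.1.eigenvectorUnitary : Matrix (Fin n) (Fin n) ℝ) = 1 := by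
    simp
  have hsp := h.1.spectral_theorem
  rw [Unitary.conjStarAlgAut_apply] at hsp
  rw [matSqrt, dif_pos h]
  have hst : (star h.1.eigenvectorUnitary : Matrix (Fin n) (Fin n) ℝ) = (h.1.eigenvectorUnitary : Matrix (Fin n) (Fin n) ℝ)ᵀ := by
    rw [Matrix.star_eq_conjTranspose, Matrix.conjTranspose_eq_transpose_of_trivial]
  conv_rhs => rw [hsp]
  have hd : Matrix.diagonal (Real.sqrt ∘ h.1.eigenvalues) * Matrix.diagonal (Real.sqrt ∘ h.1.eigenvalues)
      = Matrix.diagonal (RCLike.ofReal ∘ h.1.eigenvalues : Fin n → ℝ) := by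
    rw [Matrix.diagonal_mul_diagonal]
    congr 1
    ext i
    simp [Real.mul_self_sqrt (h.eigenvalues_nonneg i)]
  generalize (h.1.eigenvectorUnitary : Matrix (Fin n) (Fin n) ℝ) = U at *
  rw [hst] at hU ⊢
  rw [Matrix.transpose_mul, Matrix.transpose_mul, Matrix.transpose_transpose, Matrix.diagonal_transpose, ← hd]
  simp only [Matrix.mul_assoc]
  rw [← Matrix.mul_assoc Uᵀ U, hU, Matrix.one_mul]

lemma gaussianVec_sq (n : ℕ) (S : Matrix (Fin n) (Fin n) ℝ) (h : S.PosSemidef) (a : Fin n → ℝ) :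
    Integrable (fun z : Fin n → ℝ => (∑ i, z i * a i) ^ 2) (gaussianVec n S) ∧
    ∫ z, (∑ i, z i * a i) ^ 2 ∂(gaussianVec n S) = ∑ s, ∑ t, a s * a t * S s t := by
  have hc : Continuous (fun z : Fin n → ℝ => (∑ i, z i * a i) ^ 2) := by fun_prop
  have hA := mulVec_measurable n (matSqrt S)
  have e : ∀ w : Fin n → ℝ, ∑ i, (matSqrt S).mulVec w i * a i
      = ∑ k, ((matSqrt S)ᵀ.mulVec a) k * w k := by
    intro w
    have h1 : ∑ i, (matSqrt S).mulVec w i * a i = a ⬝ᵥ (matSqrt S).mulVec w := by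
      rw [dotProduct_comm]; rfl
    rw [h1, Matrix.dotProduct_mulVec, ← Matrix.mulVec_transpose]; rfl
  obtain ⟨g1, g2⟩ := gauss_sq n ((matSqrt S)ᵀ.mulVec a)
  constructor
  · rw [gaussianVec, integrable_map_measure hc.aestronglyMeasurable hA.aemeasurable]
    simpa only [Function.comp_def, e] using g1
  · rw [gaussianVec, integral_map hA.aemeasurable hc.aestronglyMeasurable]
    simp only [e]
    rw [g2]
    have h2 : ∑ k, ((matSqrt S)ᵀ.mulVec a) k ^ 2 = ((matSqrt S)ᵀ.mulVec a) ⬝ᵥ ((matSqrt S)ᵀ.mulVec a) := by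
      simp [dotProduct, sq]
    rw [h2, Matrix.dotProduct_mulVec, Matrix.vecMul_transpose, Matrix.mulVec_mulVec, matSqrt_mul n S h]
    simp only [dotProduct, Matrix.mulVec, Finset.sum_mul]
    refine Finset.sum_congr rfl fun s _ => Finset.sum_congr rfl fun t _ => by ring

lemma integral_periodogram (n : ℕ) (lam : ℝ) (γ : ℤ → ℝ) (h : (Toeplitz n γ).PosSemidef) :
    ∫ z, periodogram n lam z ∂(gaussianVec n (Toeplitz n γ))
      = 1 / (2 * Real.pi * n) * ∑ s : Fin n, ∑ t : Fin n,
          γ ((s : ℤ) - t) * Real.cos ((((s : ℤ) - t : ℤ) : ℝ) * lam) := by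
  simp only [periodogram_eq]
  have hC := gaussianVec_sq n _ h (fun t => Real.cos ((((t : ℕ) + 1 : ℕ) : ℝ) * lam))
  have hS := gaussianVec_sq n _ h (fun t => Real.sin ((((t : ℕ) + 1 : ℕ) : ℝ) * lam))
  rw [integral_const_mul, integral_add hC.1 hS.1, hC.2, hS.2, ← Finset.sum_add_distrib]
  congr 1
  refine Finset.sum_congr rfl fun s _ => ?_
  rw [← Finset.sum_add_distrib]
  refine Finset.sum_congr rfl fun t _ => ?_
  have : (((s : ℤ) - t : ℤ) : ℝ) * lam = (((s : ℕ) + 1 : ℕ) : ℝ) * lam - (((t : ℕ) + 1 : ℕ) : ℝ) * lam := by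
    push_cast; ring
  rw [this, Real.cos_sub]
  simp only [Toeplitz, Matrix.of_apply]
  ring

lemma integral_cos_int (m : ℤ) :
    ∫ x in (0 : ℝ)..(2 * Real.pi), Real.cos (m * x) = if m = 0 then 2 * Real.pi else 0 := by
  split_ifs with h
  · simp [h]
  · have hm : (m : ℝ) ≠ 0 := by exact_mod_cast h
    rw [intervalIntegral.integral_comp_mul_left (fun x => Real.cos x) hm, integral_cos]
    have : Real.sin ((m : ℝ) * (2 * Real.pi)) = 0 := by
      have := Real.sin_int_mul_pi (2 * m)
      rw [← this]; congr 1; push_cast; ring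
    simp [this]

lemma integral_cos_cos_int (h k : ℤ) :
    ∫ x in (0 : ℝ)..(2 * Real.pi), Real.cos (h * x) * Real.cos (k * x)
      = (if h = k then Real.pi else 0) + (if h = -k then Real.pi else 0) := by
  have e : ∀ x : ℝ, Real.cos (h * x) * Real.cos (k * x)
      = (Real.cos (((h - k : ℤ) : ℝ) * x) + Real.cos (((h + k : ℤ) : ℝ) * x)) / 2 := by
    intro x
    have h1 : ((h - k : ℤ) : ℝ) * x = h * x - k * x := by push_cast; ring
    have h2 : ((h + k : ℤ) : ℝ) * x = h * x + k * x := by push_cast; ring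
    rw [h1, h2, Real.cos_add, Real.cos_sub]; ring
  simp only [e]
  rw [intervalIntegral.integral_div, intervalIntegral.integral_add
    (Continuous.intervalIntegrable (by fun_prop) _ _)
    (Continuous.intervalIntegrable (by fun_prop) _ _), integral_cos_int, integral_cos_int]
  have a1 : h - k = 0 ↔ h = k := sub_eq_zero
  have a2 : h + k = 0 ↔ h = -k := add_eq_zero_iff_eq_neg
  simp only [a1, a2]
  split_ifs <;> ring

lemma summable_cos (γ : ℤ → ℝ) (hs : Summable fun h : ℤ => |γ h|) (lam : ℝ) :
    Summable fun h : ℤ => γ h * Real.cos (h * lam) := by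
  refine Summable.of_norm_bounded hs fun h => ?_
  rw [Real.norm_eq_abs, abs_mul]
  exact mul_le_of_le_one_right (abs_nonneg _) (Real.abs_cos_le_one _)

lemma specDens_continuous (γ : ℤ → ℝ) (hs : Summable fun h : ℤ => |γ h|) :
    Continuous (specDens γ) := by
  unfold specDens
  refine continuous_const.mul (continuous_tsum (u := fun h => |γ h|) (fun h => by fun_prop) hs ?_)
  intro h x
  rw [Real.norm_eq_abs, abs_mul]
  exact mul_le_of_le_one_right (abs_nonneg _) (Real.abs_cos_le_one _)

lemma specDens_coeff (γ : ℤ → ℝ) (he : ∀ h, γ (-h) = γ h) (hs : Summable fun h : ℤ => |γ h|)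
    (k : ℤ) :
    ∫ x in (0 : ℝ)..(2 * Real.pi), specDens γ x * Real.cos (k * x) = γ k := by
  have key : HasSum (fun h : ℤ => ∫ x in (0 : ℝ)..(2 * Real.pi),
      γ h * Real.cos (h * x) * Real.cos (k * x))
      (∫ x in (0 : ℝ)..(2 * Real.pi), (∑' h : ℤ, γ h * Real.cos (h * x)) * Real.cos (k * x)) := by
    refine intervalIntegral.hasSum_integral_of_dominated_convergence (fun h _ => |γ h|)
      (fun h => Continuous.aestronglyMeasurable (by fun_prop)) ?_ ?_ ?_ ?_
    · intro h
      refine Eventually.of_forall fun x _ => ?_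
      rw [Real.norm_eq_abs, abs_mul, abs_mul, mul_assoc]
      exact mul_le_of_le_one_right (abs_nonneg _)
        (mul_le_one₀ (Real.abs_cos_le_one _) (abs_nonneg _) (Real.abs_cos_le_one _))
    · exact Eventually.of_forall fun x _ => hs
    · exact intervalIntegrable_const
    · exact Eventually.of_forall fun x _ => (summable_cos γ hs x).hasSum.mul_right _
  have e : ∀ h : ℤ, ∫ x in (0 : ℝ)..(2 * Real.pi), γ h * Real.cos (h * x) * Real.cos (k * x)
      = (if h = k then γ k * Real.pi else 0) + (if h = -k then γ k * Real.pi else 0) := by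
    intro h
    simp only [mul_assoc]
    rw [intervalIntegral.integral_const_mul, integral_cos_cos_int, mul_add]
    congr 1
    · split_ifs with hh
      · rw [hh]
      · simp
    · split_ifs with hh
      · rw [hh, he]
      · simp
  simp only [e] at key
  have h2 := (hasSum_ite_eq k (γ k * Real.pi)).add (hasSum_ite_eq (-k) (γ k * Real.pi))
  have h3 := key.unique h2
  simp only [specDens, mul_assoc]
  rw [intervalIntegral.integral_const_mul, h3]
  field_simp
  ring

lemma quad_cos (n : ℕ) (v : Fin n → ℝ) (x : ℝ) :
    ∑ s : Fin n, ∑ t : Fin n, v s * v t * Real.cos ((((s : ℤ) - t : ℤ) : ℝ) * x)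
      = (∑ s : Fin n, v s * Real.cos (s * x)) ^ 2 + (∑ s : Fin n, v s * Real.sin (s * x)) ^ 2 := by
  rw [sq, sq, Finset.sum_mul_sum, Finset.sum_mul_sum, ← Finset.sum_add_distrib]
  refine Finset.sum_congr rfl fun s _ => ?_
  rw [← Finset.sum_add_distrib]
  refine Finset.sum_congr rfl fun t _ => ?_
  have : (((s : ℤ) - t : ℤ) : ℝ) * x = s * x - t * x := by push_cast; ring
  rw [this, Real.cos_sub]; ring

lemma toeplitz_posSemidef (γ : ℤ → ℝ) (he : ∀ h, γ (-h) = γ h)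
    (hs : Summable fun h : ℤ => |γ h|) (hpos : ∀ x, 0 ≤ specDens γ x) (n : ℕ) :
    (Toeplitz n γ).PosSemidef := by
  refine Matrix.PosSemidef.of_dotProduct_mulVec_nonneg ?_ ?_
  · ext s t
    simp only [Matrix.conjTranspose_apply, Toeplitz, Matrix.of_apply, star_trivial]
    rw [← he]; congr 1; ring
  · intro v
    have hc := specDens_continuous γ hs
    have e : star v ⬝ᵥ (Toeplitz n γ).mulVec v
        = ∫ x in (0 : ℝ)..(2 * Real.pi), specDens γ x *
          ∑ s : Fin n, ∑ t : Fin n, v s * v t * Real.cos ((((s : ℤ) - t : ℤ) : ℝ) * x) := by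
      simp only [Finset.mul_sum]
      rw [intervalIntegral.integral_finsetSum
        (fun s _ => Continuous.intervalIntegrable (by fun_prop) _ _)]
      simp only [dotProduct, Matrix.mulVec, Pi.star_apply, star_trivial, Finset.mul_sum]
      refine Finset.sum_congr rfl fun s _ => ?_
      rw [intervalIntegral.integral_finsetSum
        (fun s _ => Continuous.intervalIntegrable (by fun_prop) _ _)]
      refine Finset.sum_congr rfl fun t _ => ?_
      have : ∀ x : ℝ, specDens γ x * (v s * v t * Real.cos ((((s : ℤ) - t : ℤ) : ℝ) * x))
        = v s * v t * (specDens γ x * Real.cos ((((s : ℤ) - t : ℤ) : ℝ) * x)) := fun x => by ring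
      simp only [this]
      rw [intervalIntegral.integral_const_mul, specDens_coeff γ he hs]
      simp only [Toeplitz, Matrix.of_apply]
      ring
    rw [e]
    refine intervalIntegral.integral_nonneg (by positivity) fun x _ => ?_
    rw [quad_cos]
    have := hpos x
    positivity

/-- The number of `s < n` with `s - h` outside `[0,n)`. -/
noncomputable def missCount (n : ℕ) (h : ℤ) : ℝ :=
  ∑ s : Fin n, if 0 ≤ (s : ℤ) - h ∧ (s : ℤ) - h < n then (0 : ℝ) else 1

lemma missCount_nonneg (n : ℕ) (h : ℤ) : 0 ≤ missCount n h :=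
  Finset.sum_nonneg fun s _ => by split_ifs <;> norm_num

lemma missCount_le (n : ℕ) (h : ℤ) : missCount n h ≤ n := by
  calc missCount n h ≤ ∑ s : Fin n, (1 : ℝ) :=
        Finset.sum_le_sum fun s _ => by split_ifs <;> norm_num
    _ = n := by simp

lemma missCount_le' (n : ℕ) (h : ℤ) : missCount n h ≤ h.natAbs := by
  unfold missCount
  rw [Fin.sum_univ_eq_sum_range
    (fun s => if 0 ≤ (s : ℤ) - h ∧ (s : ℤ) - h < n then (0 : ℝ) else 1) n]
  have : ∀ s ∈ Finset.range n, (if 0 ≤ (s : ℤ) - h ∧ (s : ℤ) - h < n then (0 : ℝ) else 1)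
      = if ¬ (0 ≤ (s : ℤ) - h ∧ (s : ℤ) - h < n) then (1 : ℝ) else 0 := fun s _ => by
    split_ifs <;> tauto
  rw [Finset.sum_congr rfl this, Finset.sum_boole]
  rcases le_total 0 h with hh | hh
  · have : (Finset.range n).filter (fun s : ℕ => ¬ (0 ≤ (s : ℤ) - h ∧ (s : ℤ) - h < n))
        ⊆ Finset.range h.natAbs := by
      intro s hs
      simp only [Finset.mem_filter, Finset.mem_range] at hs ⊢
      omega
    have := Finset.card_le_card this
    rw [Finset.card_range] at this
    exact_mod_cast this
  · have : (Finset.range n).filter (fun s : ℕ => ¬ (0 ≤ (s : ℤ) - h ∧ (s : ℤ) - h < n))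
        ⊆ Finset.Ico (n - h.natAbs) n := by
      intro s hs
      simp only [Finset.mem_filter, Finset.mem_range, Finset.mem_Ico] at hs ⊢
      omega
    have := Finset.card_le_card this
    rw [Nat.card_Ico] at this
    have h2 := this.trans (by omega : n - (n - h.natAbs) ≤ h.natAbs)
    exact_mod_cast h2

/-- uniform bound on the bias -/
noncomputable def epsBias (γ : ℤ → ℝ) (n : ℕ) : ℝ := ∑' h : ℤ, |γ h| * (missCount n h / n)

lemma epsBias_tendsto (γ : ℤ → ℝ) (hs : Summable fun h : ℤ => |γ h|) :
    Tendsto (epsBias γ) atTop (nhds 0) := by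
  have : Tendsto (epsBias γ) atTop (nhds (∑' h : ℤ, (0 : ℝ))) := by
    refine tendsto_tsum_of_dominated_convergence hs ?_ ?_
    · intro h
      have : Tendsto (fun n : ℕ => missCount n h / n) atTop (nhds 0) := by
        refine squeeze_zero (fun n => div_nonneg (missCount_nonneg n h) (Nat.cast_nonneg n))
          (fun n => div_le_div_of_nonneg_right (missCount_le' n h) (Nat.cast_nonneg n)) ?_
        exact tendsto_const_div_atTop_nhds_zero_nat _
      simpa using this.const_mul |γ h|
    · refine Eventually.of_forall fun n h => ?_
      rw [Real.norm_eq_abs, abs_mul, abs_abs, abs_of_nonneg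
        (div_nonneg (missCount_nonneg n h) (Nat.cast_nonneg n))]
      exact mul_le_of_le_one_right (abs_nonneg _)
        (div_le_one_of_le₀ (missCount_le n h) (Nat.cast_nonneg n))
  simpa using this

lemma hasSum_row (n : ℕ) (g : ℤ → ℝ) (s : Fin n) :
    HasSum (fun h : ℤ => if 0 ≤ (s : ℤ) - h ∧ (s : ℤ) - h < n then g h else 0)
      (∑ t : Fin n, g ((s : ℤ) - t)) := by
  have hinj : Function.Injective (fun t : Fin n => (s : ℤ) - (t : ℕ)) := by
    intro a b hab
    simp only at hab
    ext; omega
  rw [← hinj.hasSum_iff]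
  · have := hasSum_fintype (fun t : Fin n => g ((s : ℤ) - t))
    convert this using 2 with t
    have := t.isLt
    simp only [Function.comp]
    rw [if_pos (by omega)]
  · intro h hh
    rw [if_neg]
    rintro ⟨h1, h2⟩
    apply hh
    exact ⟨⟨((s : ℤ) - h).toNat, by omega⟩, by simp; omega⟩

lemma bias_bound (γ : ℤ → ℝ) (hs : Summable fun h : ℤ => |γ h|) (n : ℕ) (hn : 1 ≤ n) (lam : ℝ) :
    |1 / (2 * Real.pi * n) * (∑ s : Fin n, ∑ t : Fin n,
          γ ((s : ℤ) - t) * Real.cos ((((s : ℤ) - t : ℤ) : ℝ) * lam)) - specDens γ lam|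
      ≤ 1 / (2 * Real.pi) * epsBias γ n := by
  have hn0 : (0 : ℝ) < n := by exact_mod_cast hn
  set g : ℤ → ℝ := fun h => γ h * Real.cos (h * lam) with hg
  have hgs : HasSum g (∑' h, g h) := (summable_cos γ hs lam).hasSum
  have h1 : HasSum (fun h : ℤ => ∑ s : Fin n,
      (g h - if 0 ≤ (s : ℤ) - h ∧ (s : ℤ) - h < n then g h else 0))
      (∑ s : Fin n, (∑' h, g h - ∑ t : Fin n, g ((s : ℤ) - t))) :=
    hasSum_sum fun s _ => hgs.sub (hasSum_row n g s)
  have h2 : ∀ h : ℤ, ∑ s : Fin n, (g h - if 0 ≤ (s : ℤ) - h ∧ (s : ℤ) - h < n then g h else 0)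
      = g h * missCount n h := by
    intro h
    rw [missCount, Finset.mul_sum]
    refine Finset.sum_congr rfl fun s _ => by split_ifs <;> simp
  simp only [h2] at h1
  have h3 := h1.div_const (n : ℝ)
  have hsb : Summable fun h : ℤ => |γ h| * (missCount n h / n) := by
    refine Summable.of_nonneg_of_le (fun h => mul_nonneg (abs_nonneg _)
      (div_nonneg (missCount_nonneg n h) hn0.le)) (fun h => ?_) hs
    exact mul_le_of_le_one_right (abs_nonneg _)
        (div_le_one_of_le₀ (missCount_le n h) (Nat.cast_nonneg n))
  have h4 : |(∑ s : Fin n, (∑' h, g h - ∑ t : Fin n, g ((s : ℤ) - t))) / n| ≤ epsBias γ n := by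
    rw [← h3.tsum_eq, ← Real.norm_eq_abs]
    refine tsum_of_norm_bounded hsb.hasSum fun h => ?_
    rw [mul_div_assoc, Real.norm_eq_abs, abs_mul,
      abs_of_nonneg (div_nonneg (missCount_nonneg n h) hn0.le)]
    refine mul_le_mul_of_nonneg_right ?_ (div_nonneg (missCount_nonneg n h) hn0.le)
    rw [hg, abs_mul]
    exact mul_le_of_le_one_right (abs_nonneg _) (Real.abs_cos_le_one _)
  have h5 : 1 / (2 * Real.pi * n) * (∑ s : Fin n, ∑ t : Fin n, g ((s : ℤ) - t)) - specDens γ lam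
      = - (1 / (2 * Real.pi) *
        ((∑ s : Fin n, (∑' h, g h - ∑ t : Fin n, g ((s : ℤ) - t))) / n)) := by
    rw [Finset.sum_sub_distrib]
    simp only [Finset.sum_const, Finset.card_univ, Fintype.card_fin, nsmul_eq_mul, specDens]
    have := Real.pi_pos
    rw [← hg]
    field_simp
    ring
  have h6 : ∀ s t : Fin n, γ ((s : ℤ) - t) * Real.cos ((((s : ℤ) - t : ℤ) : ℝ) * lam)
    = g ((s : ℤ) - t) := fun s t => rfl
  simp only [h6]
  rw [h5, abs_neg, abs_mul, abs_of_nonneg (by positivity : (0 : ℝ) ≤ 1 / (2 * Real.pi))]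
  exact mul_le_mul_of_nonneg_left h4 (by positivity)

lemma fourierFreq_mem (n j : ℕ) (hn : 1 ≤ n) (hj : j ≤ n / 2) :
    fourierFreq n j ∈ Set.Icc 0 (2 * Real.pi) := by
  have hn0 : (0 : ℝ) < n := by exact_mod_cast hn
  have hjn : (j : ℝ) ≤ n := by exact_mod_cast (by omega : j ≤ n)
  have := Real.pi_pos
  unfold fourierFreq
  constructor
  · positivity
  · rw [div_le_iff₀ hn0]
    exact mul_le_mul_of_nonneg_left hjn (by positivity)

/-- under the nonparametrically corrected likelihood (the pushforward of
the Gaussian parametric working model under `z ↦ F_nᵀ C_n^{1/2} F_n z`), the periodogram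
is asymptotically unbiased for `f`, uniformly over Fourier frequencies; moreover the
expected periodogram satisfies the exact multiplicative-correction identity. -/
theorem statement19 (β : ℝ) (hβ : 0 < β) (γp : ℤ → ℝ)
    (hpeven : ∀ h : ℤ, γp (-h) = γp h)
    (hpsum : Summable fun h : ℤ => |γp h|)
    (hpβ : ∀ lam : ℝ, β ≤ specDens γp lam)
    (f : ℝ → ℝ) (hf : ∀ lam ∈ Set.Icc 0 (2 * Real.pi), 0 < f lam)
    (hbdd : ∃ M : ℝ, ∀ lam ∈ Set.Icc 0 (2 * Real.pi), f lam ≤ M) :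
    let Pparam : (n : ℕ) → Measure (Fin n → ℝ) := fun n => gaussianVec n (Toeplitz n γp)
    let PC : (n : ℕ) → Measure (Fin n → ℝ) := fun n =>
      Measure.map
        (fun z => ((Fmat n)ᵀ * diagRPow n (Cmat n f (specDens γp)) (1 / 2) * Fmat n).mulVec z)
        (Pparam n)
    Tendsto (fun n : ℕ =>
        (Finset.range (n / 2 + 1)).sup' Finset.nonempty_range_add_one fun j =>
          |(∫ z, periodogram n (fourierFreq n j) z ∂(PC n)) - f (fourierFreq n j)|)
      atTop (nhds 0) ∧
    ∀ n : ℕ, 1 ≤ n → ∀ j : ℕ, j ≤ n / 2 →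
      (∫ z, periodogram n (fourierFreq n j) z ∂(PC n)) =
        f (fourierFreq n j) / specDens γp (fourierFreq n j) *
          ∫ z, periodogram n (fourierFreq n j) z ∂(Pparam n) := by
  intro Pparam PC
  have hident : ∀ n : ℕ, 1 ≤ n → ∀ j : ℕ, j ≤ n / 2 →
      (∫ z, periodogram n (fourierFreq n j) z ∂(PC n)) =
        f (fourierFreq n j) / specDens γp (fourierFreq n j) *
          ∫ z, periodogram n (fourierFreq n j) z ∂(Pparam n) := by
    intro n hn j hj
    have hc : 0 ≤ f (fourierFreq n j) / specDens γp (fourierFreq n j) :=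
      div_nonneg (hf _ (fourierFreq_mem n j hn hj)).le (hβ.le.trans (hpβ _))
    simp only [PC]
    rw [integral_map (mulVec_measurable n _).aemeasurable
      (periodogram_continuous n _).aestronglyMeasurable]
    simp only [periodogram_corr n hn f (specDens γp) j hj hc]
    rw [integral_const_mul]
  refine ⟨?_, hident⟩
  obtain ⟨M, hM⟩ := hbdd
  have hlim : Tendsto (fun n => M / β * (1 / (2 * Real.pi) * epsBias γp n)) atTop (nhds 0) := by
    simpa using ((epsBias_tendsto γp hpsum).const_mul (1 / (2 * Real.pi))).const_mul (M / β)
  refine squeeze_zero' ?_ ?_ hlim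
  · refine Eventually.of_forall fun n => ?_
    exact (abs_nonneg _).trans (Finset.le_sup' (fun j =>
      |(∫ z, periodogram n (fourierFreq n j) z ∂(PC n)) - f (fourierFreq n j)|)
      (Finset.mem_range.2 (Nat.succ_pos (n / 2))))
  · filter_upwards [eventually_ge_atTop 1] with n hn
    refine Finset.sup'_le _ _ fun j hj => ?_
    have hj' : j ≤ n / 2 := by
      have := Finset.mem_range.1 hj
      omega
    have hmem := fourierFreq_mem n j hn hj'
    have hfp := hpβ (fourierFreq n j)
    have hfp0 : 0 < specDens γp (fourierFreq n j) := hβ.trans_le hfp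
    have hfpos := hf _ hmem
    have hb := bias_bound γp hpsum n hn (fourierFreq n j)
    rw [hident n hn j hj']
    simp only [Pparam]
    rw [integral_periodogram n _ γp
      (toeplitz_posSemidef γp hpeven hpsum (fun x => hβ.le.trans (hpβ x)) n)]
    set E := 1 / (2 * Real.pi * n) * (∑ s : Fin n, ∑ t : Fin n,
          γp ((s : ℤ) - t) * Real.cos ((((s : ℤ) - t : ℤ) : ℝ) * fourierFreq n j))
    have e : f (fourierFreq n j) / specDens γp (fourierFreq n j) * E - f (fourierFreq n j)
        = f (fourierFreq n j) / specDens γp (fourierFreq n j) *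
          (E - specDens γp (fourierFreq n j)) := by
      field_simp
    rw [e, abs_mul, abs_of_pos (div_pos hfpos hfp0)]
    refine mul_le_mul ?_ hb (abs_nonneg _) ?_
    · exact div_le_div₀ (hfpos.le.trans (hM _ hmem)) (hM _ hmem) hβ hfp
    · exact div_nonneg (hfpos.le.trans (hM _ hmem)) hβ.le
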